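/- In the group U, the subgroup K = ⟨z, w⟩ generated by z = (bc^{-1})^4 and w = (c^{-1}b)^4 is a normal subgroup of U of index 2048. -/

import Mathlib

/-- The defining relators of the group `U` on generators `a, b, c` (indexed `0, 1, 2`):
`a^4, b^4, c^4, (ab)^2, (bc)^2, (abc)^2, (a^2b^2)^4, a^2c^2b^2(ac)^2, [a,c⁻¹]b^2`,
where `[x,y] = x⁻¹y⁻¹xy`. -/
def Urels : Set (FreeGroup (Fin 3)) :=
  {(FreeGroup.of 0) ^ 4, (FreeGroup.of 1) ^ 4, (FreeGroup.of 2) ^ 4,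
   (FreeGroup.of 0 * FreeGroup.of 1) ^ 2,
   (FreeGroup.of 1 * FreeGroup.of 2) ^ 2,
   (FreeGroup.of 0 * FreeGroup.of 1 * FreeGroup.of 2) ^ 2,
   ((FreeGroup.of 0) ^ 2 * (FreeGroup.of 1) ^ 2) ^ 4,
   (FreeGroup.of 0) ^ 2 * (FreeGroup.of 2) ^ 2 * (FreeGroup.of 1) ^ 2 *
     (FreeGroup.of 0 * FreeGroup.of 2) ^ 2,
   (FreeGroup.of 0)⁻¹ * FreeGroup.of 2 * FreeGroup.of 0 * (FreeGroup.of 2)⁻¹ *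
     (FreeGroup.of 1) ^ 2}

/-- The finitely presented group `U`. -/
abbrev UGroup : Type := PresentedGroup Urels

/-- The generator `a` of `U`. -/
def Ua : UGroup := PresentedGroup.of 0

/-- The generator `b` of `U`. -/
def Ub : UGroup := PresentedGroup.of 1

/-- The generator `c` of `U`. -/
def Uc : UGroup := PresentedGroup.of 2

/-- The element `z = (bc⁻¹)^4` of `U`. -/
def Uz : UGroup := (Ub * Uc⁻¹) ^ 4

/-- The element `w = (c⁻¹b)^4` of `U`. -/
def Uw : UGroup := (Uc⁻¹ * Ub) ^ 4

abbrev Ltr : Type := Fin 3 × Bool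

def ga : Ltr := (0, true)
def gA : Ltr := (0, false)
def gb : Ltr := (1, true)
def gB : Ltr := (1, false)
def gc : Ltr := (2, true)
def gC : Ltr := (2, false)

def tab_ga : List (Fin 40) := [2, 0, 3, 1, 7, 10, 14, 5, 6, 19, 4, 9, 15, 22, 16, 24, 8, 13, 30, 20, 11, 12, 27, 26, 21, 23, 28, 17, 25, 18, 31, 29, 32, 33, 34, 36, 35, 37, 38, 39]

def tab_gA : List (Fin 40) := [1, 3, 0, 2, 10, 7, 8, 4, 16, 11, 5, 20, 21, 17, 6, 12, 14, 27, 29, 9, 19, 24, 13, 25, 15, 28, 23, 22, 26, 31, 18, 30, 32, 33, 34, 36, 35, 37, 38, 39]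

def tab_gb : List (Fin 40) := [0, 4, 1, 8, 6, 12, 2, 3, 15, 17, 20, 5, 13, 11, 10, 7, 25, 28, 9, 29, 23, 22, 21, 14, 16, 27, 19, 24, 18, 30, 26, 31, 33, 32, 36, 34, 37, 35, 39, 38]

def tab_gB : List (Fin 40) := [0, 2, 6, 7, 1, 11, 4, 15, 3, 18, 14, 13, 5, 12, 23, 8, 24, 9, 28, 26, 10, 22, 21, 20, 27, 16, 30, 25, 17, 19, 29, 31, 33, 32, 35, 37, 34, 36, 39, 38]

def tab_gc : List (Fin 40) := [0, 6, 2, 7, 11, 1, 13, 15, 18, 3, 14, 4, 12, 5, 10, 9, 26, 8, 28, 24, 23, 21, 22, 20, 25, 30, 16, 27, 17, 29, 19, 31, 33, 35, 32, 34, 37, 39, 36, 38]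

def tab_gC : List (Fin 40) := [0, 5, 2, 9, 11, 13, 1, 3, 17, 15, 14, 4, 12, 6, 10, 7, 26, 28, 8, 30, 23, 21, 22, 20, 19, 24, 16, 27, 18, 29, 25, 31, 34, 32, 35, 33, 38, 36, 39, 37]

def reps : List (List Ltr) := [[], [gb, ga], [ga], [ga, ga], [gb, gb, ga], [ga, gc, ga, ga], [ga, gb, ga, ga], [gc, ga, ga], [gb, ga, ga], [gb, gc, gb, ga, ga], [ga, ga, gc, ga, ga], [gc, gb, gb, ga], [gb, ga, gc, ga, ga], [gc, ga, gb, ga, ga], [ga, ga, gb, ga, ga], [gb, gb, ga, ga], [gb, ga, gb, gb, ga, ga], [gb, gb, gc, gb, ga, ga], [gc, gb, ga, ga], [ga, gb, gc, gb, ga, ga], [gc, ga, ga, gc, gc, gb, ga, ga], [ga, ga, gb, gb, ga, ga], [ga, gc, ga, gb, ga, ga], [ga, ga, gc, gc, gb, ga, ga], [ga, gb, gb, ga, ga], [ga, gc, gc, gb, ga, ga], [ga, ga, ga, gc, gc, gb, ga, ga], [gb, ga, gc, gc, gb, ga, ga], [gc, gc, gb, ga, ga], [gb, ga, gb, gc,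 gb, ga, ga], [gc, ga, gc, gc, gb, ga, ga], [ga, gc, ga, gc, gc, gb, ga, ga]]

def urels : List (List Ltr) := [[ga, ga, ga, ga], [gb, gb, gb, gb], [gc, gc, gc, gc], [ga, gb, ga, gb], [gb, gc, gb, gc], [ga, gb, gc, ga, gb, gc], [ga, ga, gb, gb, ga, ga, gb, gb, ga, ga, gb, gb, ga, ga, gb, gb], [ga, ga, gc, gc, gb, gb, ga, gc, ga, gc], [gA, gc, ga, gC, gb, gb]]

def certs : List (Ltr × Fin 40 × ℕ × ℕ) := [(ga, 0, 9, 0), (gc, 2, 8, 1), (ga, 2, 9, 0), (gc, 3, 9, 0), (gb, 3, 9, 0), (gb, 2, 9, 0), (ga, 1, 3, 0), (ga, 3, 0, 0), (gb, 8, 9, 0), (ga, 7, 9, 0), (gc, 5, 7, 7), (gC, 15, 8, 3), (ga, 8, 9, 0), (gb, 6, 3, 1), (gc, 1, 4, 1), (gb, 15, 8, 4), (gb, 7, 1, 0), (gc, 8, 9, 0), (gc, 18, 9, 0), (ga, 28, 9, 0), (gb, 5, 9, 0), (ga, 12, 3, 0), (gb, 1, 9, 0), (gb, 4, 1, 0),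 (ga, 4, 3, 0), (ga, 15, 9, 0), (gb, 18, 9, 0), (gc, 9, 4, 1), (gc, 15, 2, 0), (ga, 5, 9, 0), (ga, 10, 0, 0), (ga, 6, 9, 0), (gb, 14, 3, 1), (gc, 14, 7, 7), (gc, 10, 8, 1), (gc, 6, 9, 0), (gc, 13, 2, 0), (gb, 12, 7, 4), (gc, 12, 4, 1), (gc, 25, 9, 0), (gb, 9, 9, 0), (gc, 17, 4, 1), (ga, 17, 5, 0), (gc, 28, 2, 0), (gA, 30, 8, 0), (ga, 25, 9, 0), (gb, 25, 9, 0), (gc, 4, 9, 0), (gc, 11, 7, 2), (gb, 11, 4, 0), (ga, 11, 7, 8), (gb, 13, 1, 0), (gb, 17, 7, 4), (ga, 27, 3, 0), (gb, 28, 1, 0), (gc, 24, 5, 2), (gb, 23, 7, 5), (ga, 24, 9, 0), (ga, 21, 0, 0), (gc, 21, 7, 9), (gb, 24, 9, 0), (ga, 16, 3, 0), (ga, 14, 0, 0), (gb, 16, 3, 1), (gC, 27, 8, 3), (gb, 27, 1, 0), (ga, 9, 9, 0), (gc, 30, 8, 1), (gc, 19, 2, 0), (gc, 23, 9, 0), (ga,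 20, 7, 6), (ga, 19, 0, 0), (gb, 10, 3, 1), (gb, 20, 1, 0), (gc, 20, 4, 1), (ga, 13, 9, 0), (gb, 22, 3, 1), (gc, 22, 5, 2), (gb, 21, 6, 3), (ga, 22, 0, 0), (ga, 30, 9, 0), (ga, 23, 9, 0), (gc, 26, 5, 2), (gb, 26, 3, 1), (gb, 30, 4, 0), (gc, 16, 4, 1), (ga, 26, 0, 0), (gc, 31, 8, 1), (gb, 19, 9, 0), (ga, 29, 3, 0), (ga, 31, 0, 0), (gc, 29, 7, 7), (gb, 29, 1, 0), (gb, 31, 3, 1)]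

def codes : List ℕ := [72, 472, 552, 192, 516, 276, 116, 236, 559, 199, 79, 479, 115, 235, 515, 275, 193, 233, 473, 273, 557, 117, 77, 517, 478, 278, 198, 238, 74, 514, 554, 114, 272, 512, 232, 112, 475, 75, 195, 555, 239, 119, 279, 519, 196, 556, 476, 76, 113, 553, 513, 73, 234, 194, 274, 474, 518, 78, 118, 558, 277, 477, 237, 197]

def tabs : List (List (Fin 40)) := [tab_gA, tab_ga, tab_gB, tab_gb, tab_gC, tab_gc]

/-- the left action of a letter on the 40 points -/
def T (l : Ltr) (x : Fin 40) : Fin 40 :=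
  (tabs.getD (2 * l.1.val + l.2.toNat) []).getD x.val 0

def linv (l : Ltr) : Ltr := (l.1, !l.2)

def ap (w : List Ltr) (x : Fin 40) : Fin 40 := w.foldr T x

theorem T_inv : ∀ l x, T (linv l) (T l x) = x := by decide +kernel

def perm (i : Fin 3) : Equiv.Perm (Fin 40) where
  toFun := T (i, true)
  invFun := T (i, false)
  left_inv x := T_inv (i, true) x
  right_inv x := T_inv (i, false) x

def ev (w : List Ltr) : UGroup := PresentedGroup.mk Urels (FreeGroup.mk w)

theorem ev_append (v w : List Ltr) : ev (v ++ w) = ev v * ev w := by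
  rw [ev, ← FreeGroup.mul_mk, map_mul]; rfl

theorem ev_cons (l : Ltr) (w : List Ltr) : ev (l :: w) = ev [l] * ev w := ev_append [l] w

theorem ev_nil : ev [] = 1 := by
  rw [ev, ← FreeGroup.one_eq_mk, map_one]

theorem ev_surj (u : UGroup) : ∃ w, ev w = u := by
  obtain ⟨g, rfl⟩ := PresentedGroup.mk_surjective Urels u
  exact ⟨g.toWord, by rw [ev, FreeGroup.mk_toWord]⟩

theorem ev_linv (l : Ltr) : ev [linv l] = (ev [l])⁻¹ := by
  rw [ev, ev, ← map_inv, FreeGroup.inv_mk]; rfl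

theorem Urels_eq : Urels = {g | ∃ w ∈ urels, g = FreeGroup.mk w} := by
  ext g
  simp only [urels, List.mem_cons, List.not_mem_nil, or_false, exists_eq_or_imp, exists_eq_left,
    Set.mem_ofPred_eq]
  rfl

theorem ev_urels {w : List Ltr} (hw : w ∈ urels) : ev w = 1 := by
  apply PresentedGroup.one_of_mem
  rw [Urels_eq]; exact ⟨w, hw, rfl⟩

theorem ev_rotate {w : List Ltr} (hw : ev w = 1) (j : ℕ) : ev (w.rotate j) = 1 := by
  rw [List.rotate_eq_drop_append_take_mod, ev_append, mul_eq_one_iff_eq_inv']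
  rw [← List.take_append_drop (j % w.length) w, ev_append, mul_eq_one_iff_eq_inv] at hw
  simpa using hw

/-! the homomorphism to permutations -/

theorem lift_mk (w : List Ltr) (x : Fin 40) : FreeGroup.lift perm (FreeGroup.mk w) x = ap w x := by
  induction w with
  | nil => rfl
  | cons l w ih =>
    have h : FreeGroup.mk (l :: w) = FreeGroup.mk [l] * FreeGroup.mk w := by
      rw [FreeGroup.mul_mk]; rfl
    rw [h, map_mul, Equiv.Perm.mul_apply, ih]
    obtain ⟨i, s⟩ := l
    cases s <;> simp [FreeGroup.lift_mk, ap] <;> rfl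

theorem rels_act : ∀ w ∈ urels, ∀ x, ap w x = x := by decide +kernel

def phi : UGroup →* Equiv.Perm (Fin 40) :=
  PresentedGroup.toGroup (f := perm) (rels := Urels) (by
    rw [Urels_eq]
    rintro _ ⟨w, hw, rfl⟩
    ext x : 1
    rw [lift_mk, rels_act w hw x]; rfl)

theorem phi_ev (w : List Ltr) (x : Fin 40) : phi (ev w) x = ap w x := lift_mk w x

/-! coset enumeration over B = ⟨b, c⟩ -/

def Bsub : Subgroup UGroup := Subgroup.closure {Ub, Uc}

def rw_ (x : Fin 40) : List Ltr := reps.getD x.val []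

def pt (x : Fin 40) : UGroup ⧸ Bsub := (ev (rw_ x) : UGroup)

def run (k : List (Ltr × Fin 40)) : List Ltr → Fin 40 → Option (Fin 40)
  | [], x => some x
  | l :: w, x => (run k w x).bind fun y => if (l, y) ∈ k then some (T l y) else none

def Valid (k : List (Ltr × Fin 40)) : Prop := ∀ e ∈ k, ev [e.1] • pt e.2 = pt (T e.1 e.2)

theorem run_sound {k : List (Ltr × Fin 40)} (hk : Valid k) (w : List Ltr) (x y : Fin 40)
    (h : run k w x = some y) : ev w • pt x = pt y := by
  induction w generalizing y with
  | nil =>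
    simp only [run, Option.some.injEq] at h
    rw [ev_nil, one_smul, h]
  | cons l w ih =>
    simp only [run, Option.bind_eq_some_iff] at h
    obtain ⟨v, hv, h⟩ := h
    split_ifs at h with hm
    simp only [Option.some.injEq] at h
    rw [ev_cons, mul_smul, ih v hv, ← h]
    exact hk _ hm

def okc (k : List (Ltr × Fin 40)) (c : Ltr × Fin 40 × ℕ × ℕ) : Bool :=
  if c.2.2.1 = 9 then rw_ (T c.1 c.2.1) = c.1 :: rw_ c.2.1
  else match (urels.getD c.2.2.1 []).rotate c.2.2.2 with
    | [] => false
    | l :: w => l = c.1 ∧ run k w (T c.1 c.2.1) = some c.2.1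

theorem okc_sound {k : List (Ltr × Fin 40)} (hk : Valid k) (c : Ltr × Fin 40 × ℕ × ℕ)
    (h : okc k c = true) : ev [c.1] • pt c.2.1 = pt (T c.1 c.2.1) := by
  unfold okc at h
  split_ifs at h with h9
  · have h' := of_decide_eq_true h
    have h2 : pt (T c.1 c.2.1) = ((ev (rw_ (T c.1 c.2.1)) : UGroup) : UGroup ⧸ Bsub) := rfl
    rw [h2, h', ev_cons]; rfl
  · have he : ev ((urels.getD c.2.2.1 []).rotate c.2.2.2) = 1 := by
      apply ev_rotate
      rw [List.getD_eq_getElem?_getD]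
      rcases hu : urels[c.2.2.1]? with _ | w
      · exact ev_nil
      · exact ev_urels (List.mem_of_getElem? hu)
    split at h
    · cases h
    · rename_i l w hw
      obtain ⟨rfl, h2⟩ := of_decide_eq_true h
      have h3 := run_sound hk _ _ _ h2
      rw [hw, ev_cons] at he
      rw [← h3, ← mul_smul, he, one_smul]

def addc (k : List (Ltr × Fin 40)) (c : Ltr × Fin 40 × ℕ × ℕ) : List (Ltr × Fin 40) :=
  (c.1, c.2.1) :: (linv c.1, T c.1 c.2.1) :: k

theorem inv_valid {l : Ltr} {x : Fin 40} (h : ev [l] • pt x = pt (T l x)) :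
    ev [linv l] • pt (T l x) = pt (T (linv l) (T l x)) := by
  rw [T_inv, ← h, ev_linv, inv_smul_smul]

def chk : List (Ltr × Fin 40) → List (Ltr × Fin 40 × ℕ × ℕ) → Bool
  | k, [] => decide (∀ l : Ltr, ∀ x : Fin 40, x.val < 32 → (l, x) ∈ k)
  | k, c :: cs => okc k c && chk (addc k c) cs

theorem chk_sound (cs : List (Ltr × Fin 40 × ℕ × ℕ)) (k : List (Ltr × Fin 40)) (hk : Valid k)
    (h : chk k cs = true) (l : Ltr) (x : Fin 40) (hx : x.val < 32) :
    ev [l] • pt x = pt (T l x) := by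
  induction cs generalizing k with
  | nil => exact hk _ (of_decide_eq_true h l x hx)
  | cons c cs ih =>
    rw [chk, Bool.and_eq_true] at h
    refine ih _ ?_ h.2
    have h1 := okc_sound hk c h.1
    intro e he
    simp only [addc, List.mem_cons] at he
    rcases he with rfl | rfl | he
    · exact h1
    · exact inv_valid h1
    · exact hk e he

def k0 : List (Ltr × Fin 40) := [(gb, 0), (gB, 0), (gc, 0), (gC, 0)]

theorem fix_valid {l : Ltr} (h : ev [l] ∈ Bsub) (hT : T l 0 = 0) :
    ev [l] • pt 0 = pt (T l 0) := by
  rw [hT]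
  have h0 : pt 0 = ((1 : UGroup) : UGroup ⧸ Bsub) := by
    show ((ev [] : UGroup) : UGroup ⧸ Bsub) = _
    rw [ev_nil]
  rw [h0]
  show ((ev [l] * 1 : UGroup) : UGroup ⧸ Bsub) = _
  rw [QuotientGroup.eq]
  simpa using h

theorem evb : ev [gb] = Ub := rfl
theorem evc : ev [gc] = Uc := rfl
theorem evB : ev [gB] = Ub⁻¹ := ev_linv gb
theorem evC : ev [gC] = Uc⁻¹ := ev_linv gc

theorem k0_valid : Valid k0 := by
  have hb : Ub ∈ Bsub := Subgroup.subset_closure (by simp)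
  have hc : Uc ∈ Bsub := Subgroup.subset_closure (by simp)
  intro e he
  simp only [k0, List.mem_cons, List.not_mem_nil, or_false] at he
  rcases he with rfl | rfl | rfl | rfl
  · exact fix_valid (by rw [evb]; exact hb) (by decide)
  · exact fix_valid (by rw [evB]; exact inv_mem hb) (by decide)
  · exact fix_valid (by rw [evc]; exact hc) (by decide)
  · exact fix_valid (by rw [evC]; exact inv_mem hc) (by decide)

theorem chk_ok : chk k0 certs = true := by decide +kernel

theorem T_lt : ∀ l x, x.val < 32 → (T l x).val < 32 := by decide +kernel

theorem cover_B (u : UGroup) : ∃ x : Fin 40, x.val < 32 ∧ ∃ h ∈ Bsub, u = ev (rw_ x) * h := by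
  obtain ⟨w, rfl⟩ := ev_surj u
  suffices h : ∃ x : Fin 40, x.val < 32 ∧ ev w • pt 0 = pt x by
    obtain ⟨x, hx, h⟩ := h
    refine ⟨x, hx, (ev (rw_ x))⁻¹ * ev w, ?_, by group⟩
    have h' : ((ev w * ev [] : UGroup) : UGroup ⧸ Bsub) = (ev (rw_ x) : UGroup) := h
    rw [ev_nil, mul_one] at h'
    exact QuotientGroup.eq.1 h'.symm
  induction w with
  | nil => exact ⟨0, by decide, by rw [ev_nil, one_smul]⟩
  | cons l w ih =>
    obtain ⟨x, hx, h⟩ := ih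
    refine ⟨T l x, T_lt l x hx, ?_⟩
    rw [ev_cons, mul_smul, h]
    exact chk_sound certs k0 k0_valid chk_ok l x hx

/-! the structure of B -/

def Up : UGroup := Ub * Uc⁻¹
def Uq : UGroup := Uc⁻¹ * Ub

theorem hb4 : Ub ^ 4 = 1 := ev_urels (w := [gb, gb, gb, gb]) (by decide)
theorem hc4 : Uc ^ 4 = 1 := ev_urels (w := [gc, gc, gc, gc]) (by decide)
theorem hbc : Ub * Uc * (Ub * Uc) = 1 := ev_urels (w := [gb, gc, gb, gc]) (by decide)

theorem pb : Up * Ub = Ub * Uq := by simp [Up, Uq, mul_assoc]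

theorem bcb : Ub * Uc * Ub = Uc⁻¹ := by
  rw [eq_inv_iff_mul_eq_one]; simpa [mul_assoc] using hbc

theorem cbc : Uc * Ub * Uc = Ub⁻¹ := by
  apply eq_inv_of_mul_eq_one_right
  simpa [mul_assoc] using hbc

theorem qb : Uq * Ub = Ub * Up⁻¹ := by
  have h4 : Ub * (Ub * (Ub * Ub)) = 1 := by simpa [pow_succ, mul_assoc] using hb4
  have h : Ub * Ub * Ub = Ub⁻¹ := by
    rw [eq_inv_iff_mul_eq_one]; simpa [mul_assoc] using h4
  calc Uq * Ub = Ub * Uc * (Ub * Ub * Ub) := by rw [Uq, ← bcb]; simp [mul_assoc]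
    _ = Ub * Up⁻¹ := by rw [h, Up]; simp [mul_assoc]

theorem pq : Uq * Up = Up * Uq := by
  have h4 : Uc * (Uc * (Uc * Uc)) = 1 := by simpa [pow_succ, mul_assoc] using hc4
  have hcc : Uc⁻¹ * Uc⁻¹ = Uc * Uc := by
    rw [← mul_inv_rev, inv_eq_iff_mul_eq_one]; simpa [mul_assoc] using h4
  have h4' : Ub * (Ub * (Ub * Ub)) = 1 := by simpa [pow_succ, mul_assoc] using hb4
  have hbb : Ub⁻¹ * Ub⁻¹ = Ub * Ub := by
    rw [← mul_inv_rev, inv_eq_iff_mul_eq_one]; simpa [mul_assoc] using h4'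
  calc Uq * Up = Uc⁻¹ * (Ub * Ub) * Uc⁻¹ := by simp [Up, Uq, mul_assoc]
    _ = (Uc⁻¹ * Ub⁻¹) * (Ub⁻¹ * Uc⁻¹) := by rw [← hbb]; simp [mul_assoc]
    _ = (Ub * Uc) * (Uc * Ub) := by
      have h1 : Uc⁻¹ * Ub⁻¹ = Ub * Uc := by rw [← bcb]; simp [mul_assoc]
      have h2 : Ub⁻¹ * Uc⁻¹ = Uc * Ub := by rw [← cbc]; simp [mul_assoc]
      rw [h1, h2]
    _ = Ub * (Uc⁻¹ * Uc⁻¹) * Ub := by rw [hcc]; simp [mul_assoc]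
    _ = Up * Uq := by simp [Up, Uq, mul_assoc]

theorem step_b (k m n : ℤ) :
    Ub ^ k * Up ^ m * Uq ^ n * Ub = Ub ^ (k + 1) * Up ^ (-n) * Uq ^ m := by
  have h1 : SemiconjBy Ub Uq Up := pb.symm
  have h2 : SemiconjBy Ub Up⁻¹ Uq := qb.symm
  have h1' := (h1.zpow_right m).eq
  have h2' := (h2.zpow_right n).eq
  have hc : Commute (Uq ^ m) (Up ^ (-n)) := Commute.zpow_zpow pq _ _
  rw [mul_assoc, ← h2', ← mul_assoc, mul_assoc (Ub ^ k), ← h1', zpow_add_one, inv_zpow',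
    mul_assoc (Ub ^ k), mul_assoc Ub, hc.eq]
  simp only [mul_assoc]

theorem step_b' (k m n : ℤ) :
    Ub ^ k * Up ^ m * Uq ^ n * Ub⁻¹ = Ub ^ (k - 1) * Up ^ n * Uq ^ (-m) := by
  rw [mul_inv_eq_iff_eq_mul, step_b]; simp

theorem cover_nf (h : UGroup) (hh : h ∈ Bsub) :
    ∃ k m n : ℤ, h = Ub ^ k * Up ^ m * Uq ^ n := by
  induction hh using Subgroup.closure_induction_right with
  | one => exact ⟨0, 0, 0, by simp⟩
  | mul_right x hx y hy ih =>
    obtain ⟨k, m, n, rfl⟩ := ih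
    rcases hy with rfl | rfl
    · exact ⟨_, _, _, step_b k m n⟩
    · refine ⟨k + 1, -n, m - 1, ?_⟩
      have : Uc = Ub * Uq⁻¹ := by simp [Uq]
      rw [this, ← mul_assoc, step_b, zpow_sub_one]; simp only [mul_assoc]
  | mul_inv_cancel x hx y hy ih =>
    obtain ⟨k, m, n, rfl⟩ := ih
    rcases hy with rfl | rfl
    · exact ⟨_, _, _, step_b' k m n⟩
    · refine ⟨k - 1, n + 1, -m, ?_⟩
      have : Uc⁻¹ = Uq * Ub⁻¹ := by simp [Uq]
      rw [this, ← mul_assoc, mul_assoc _ _ Uq, ← zpow_add_one, step_b']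

def sw (t : Fin 64) : List Ltr :=
  (List.replicate (t.val / 16) [gb] ++ List.replicate (t.val / 4 % 4) [gb, gC] ++
    List.replicate (t.val % 4) [gC, gb]).flatten

theorem ev_rep (w : List Ltr) (n : ℕ) : ev (List.replicate n w).flatten = ev w ^ n := by
  induction n with
  | zero => exact ev_nil
  | succ n ih => rw [List.replicate_succ, List.flatten_cons, ev_append, ih, pow_succ']

theorem ev_sw (t : Fin 64) :
    ev (sw t) = Ub ^ (t.val / 16) * Up ^ (t.val / 4 % 4) * Uq ^ (t.val % 4) := by
  have h1 : ev [gb, gC] = Up := by rw [ev_cons, evb, evC]; rfl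
  have h2 : ev [gC, gb] = Uq := by rw [ev_cons, evb, evC]; rfl
  rw [sw, List.flatten_append, List.flatten_append, ev_append, ev_append, ev_rep, ev_rep, ev_rep,
    evb, h1, h2]

abbrev Ksub : Subgroup UGroup := Subgroup.closure {Uz, Uw}

theorem zpow_red (x : UGroup) (m : ℤ) :
    ∃ i : ℕ, i < 4 ∧ ∃ j : ℤ, x ^ m = x ^ i * (x ^ 4) ^ j := by
  refine ⟨(m % 4).toNat, by omega, m / 4, ?_⟩
  rw [← zpow_natCast x 4, ← zpow_mul, ← zpow_natCast, ← zpow_add]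
  congr 1
  push_cast
  omega

theorem cover_sw (h : UGroup) (hh : h ∈ Bsub) : ∃ t, ∃ k ∈ Ksub, h = ev (sw t) * k := by
  obtain ⟨k, m, n, rfl⟩ := cover_nf h hh
  obtain ⟨k', hk, j1, e1⟩ := zpow_red Ub k
  obtain ⟨m', hm, j2, e2⟩ := zpow_red Up m
  obtain ⟨n', hn, j3, e3⟩ := zpow_red Uq n
  have hz : Uz ∈ Ksub := Subgroup.subset_closure (by simp)
  have hw : Uw ∈ Ksub := Subgroup.subset_closure (by simp)
  refine ⟨⟨16 * k' + 4 * m' + n', by omega⟩, Uz ^ j2 * Uw ^ j3,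
    mul_mem (zpow_mem hz _) (zpow_mem hw _), ?_⟩
  rw [ev_sw, e1, e2, e3, hb4, one_zpow, mul_one]
  have a1 : (16 * k' + 4 * m' + n') / 16 = k' := by omega
  have a2 : (16 * k' + 4 * m' + n') / 4 % 4 = m' := by omega
  have a3 : (16 * k' + 4 * m' + n') % 4 = n' := by omega
  simp only [a1, a2, a3]
  have hc : Commute ((Up ^ 4) ^ j2) (Uq ^ n') :=
    ((Commute.pow_pow (show Commute Up Uq from pq.symm) 4 n')).zpow_left j2
  show _ = _ * ((Up ^ 4) ^ j2 * (Uq ^ 4) ^ j3)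
  simp only [mul_assoc]
  rw [← mul_assoc ((Up ^ 4) ^ j2) (Uq ^ n'), hc.eq]
  simp only [mul_assoc]

/-! the transversal -/

def F (e : Fin 32 × Fin 64) : UGroup := ev (rw_ (Fin.castLE (by decide) e.1)) * ev (sw e.2)

theorem F_zero : F (0, 0) = 1 := by
  show ev [] * ev [] = 1
  rw [ev_nil, one_mul]

theorem cover (u : UGroup) : ∃ e, ∃ k ∈ Ksub, u = F e * k := by
  obtain ⟨x, hx, h, hh, rfl⟩ := cover_B u
  obtain ⟨t, k, hk, rfl⟩ := cover_sw h hh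
  exact ⟨(⟨x.val, hx⟩, t), k, hk, by rw [F, ← mul_assoc]; rfl⟩

def code (t : Fin 64) : ℕ := ((ap (sw t) 1).val) * 40 + ((ap (sw t) 32).val)

theorem code_eq : ∀ t, codes.idxOf (code t) = t.val := by decide +kernel

theorem sw_fix : ∀ t, ap (sw t) 0 = 0 := by decide +kernel

theorem reps_zero : ∀ i : Fin 32, (ap (rw_ (Fin.castLE (by decide) i)) 0).val = i.val := by
  decide +kernel

theorem phi_F_inj (e e' : Fin 32 × Fin 64) (h : phi (F e) = phi (F e')) : e = e' := by
  have h0 : ∀ e, (phi (F e) 0).val = e.1.val := by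
    intro e
    rw [F, map_mul, Equiv.Perm.mul_apply, phi_ev, phi_ev, sw_fix, reps_zero]
  have h1 : e.1 = e'.1 := by
    apply Fin.ext
    rw [← h0, ← h0, h]
  have h2 : phi (ev (sw e.2)) = phi (ev (sw e'.2)) := by
    rw [F, F, map_mul, map_mul, h1] at h
    exact mul_left_cancel h
  have h3 : code e.2 = code e'.2 := by
    simp only [code, ← phi_ev, h2]
  refine Prod.ext h1 (Fin.ext ?_)
  rw [← code_eq, ← code_eq, h3]

theorem K_le_ker : Ksub ≤ phi.ker := by
  rw [Subgroup.closure_le]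
  have hz : Uz = ev (sw 4) ^ 4 := by rw [ev_sw]; simp [Uz, Up]
  have hw : Uw = ev (sw 1) ^ 4 := by rw [ev_sw]; simp [Uw, Uq]
  rintro x (rfl | rfl)
  · rw [hz, ← ev_rep]
    apply MonoidHom.mem_ker.2
    ext x : 1
    rw [phi_ev]
    revert x
    decide +kernel
  · rw [hw, ← ev_rep]
    apply MonoidHom.mem_ker.2
    ext x : 1
    rw [phi_ev]
    revert x
    decide +kernel

theorem K_eq_ker : Ksub = phi.ker := by
  refine le_antisymm K_le_ker fun u hu => ?_
  obtain ⟨e, k, hk, rfl⟩ := cover u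
  have h1 : phi (F e) = phi (F (0, 0)) := by
    have h2 := MonoidHom.mem_ker.1 hu
    rw [map_mul, MonoidHom.mem_ker.1 (K_le_ker hk), mul_one] at h2
    rw [h2, F_zero, map_one]
  rw [phi_F_inj _ _ h1, F_zero, one_mul]
  exact hk

/-- The subgroup `K = ⟨z, w⟩` of `U` is normal of index `2048`. -/
theorem K_normal_index_2048 :
    (Subgroup.closure {Uz, Uw} : Subgroup UGroup).Normal ∧
    (Subgroup.closure {Uz, Uw} : Subgroup UGroup).index = 2048 := by
  refine ⟨?_, ?_⟩
  · have h : Ksub.Normal := by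
      rw [K_eq_ker]; infer_instance
    exact h
  · have hbij : Function.Bijective (fun e => ((F e : UGroup) : UGroup ⧸ Ksub)) := by
      constructor
      · intro e e' h
        apply phi_F_inj
        have h1 := MonoidHom.mem_ker.1 (K_le_ker (QuotientGroup.eq.1 h))
        rw [map_mul, map_inv, inv_mul_eq_one] at h1
        exact h1
      · intro x
        obtain ⟨u, rfl⟩ := QuotientGroup.mk_surjective x
        obtain ⟨e, k, hk, rfl⟩ := cover u
        exact ⟨e, QuotientGroup.eq.2 (by simpa using hk)⟩
    show Nat.card (UGroup ⧸ Ksub) = 2048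
    rw [← Nat.card_congr (Equiv.ofBijective _ hbij)]
    simp
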